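/- Let ε ∈ (0, π/6) and let G = (V,E) be an ε-regular graph with #V = n such that every straight path of G is open. Then, counting strata with multiplicity, Σ_{s ∈ S(G)} l(s) = 2n. -/

import Mathlib

open scoped Real

noncomputable section

abbrev Pt : Type := EuclideanSpace ℝ (Fin 2)

/-- The clockwise angle in `[0, 2π)` between the vectors `u` and `v`. -/
noncomputable def cwAngle (u v : Pt) : ℝ :=
  let a := Complex.arg ((⟨u 0, u 1⟩ : ℂ) * (starRingEnd ℂ) (⟨v 0, v 1⟩ : ℂ))
  if a < 0 then a + 2 * π else a

/-- A graph with finitely many vertices in the plane and unordered pairs of distinct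
vertices as edges. -/
structure BondGraph where
  V : Set Pt
  finV : V.Finite
  E : Set (Sym2 Pt)
  not_diag : ∀ e ∈ E, ¬ e.IsDiag
  mem_V : ∀ e ∈ E, ∀ x ∈ e, x ∈ V

/-- The neighborhood `N(x, E)`. -/
def nbhd (G : BondGraph) (x : Pt) : Set Pt := {y | s(x, y) ∈ G.E}

/-- The degree `#N(x, E)`. -/
noncomputable def deg (G : BondGraph) (x : Pt) : ℕ := (nbhd G x).ncard

/-- The bond energy `F_bond(G) = Σ_{x ∈ V} (4 − #N(x,E))`. -/
noncomputable def Fbond (G : BondGraph) : ℤ := ∑ᶠ x ∈ G.V, ((4 : ℤ) - (deg G x : ℤ))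

def goodAngles (ε : ℝ) : Set ℝ :=
  Set.Icc (π / 2 - ε) (π / 2 + ε) ∪ Set.Icc (π - ε) (π + ε) ∪
    Set.Icc (3 * π / 2 - ε) (3 * π / 2 + ε)

/-- `ε`-regularity of a graph. -/
def EpsRegular (ε : ℝ) (G : BondGraph) : Prop :=
  (∀ x y : Pt, s(x, y) ∈ G.E → 1 - ε ≤ dist x y) ∧
  (∀ x y z : Pt, s(x, y) ∈ G.E → s(z, y) ∈ G.E → x ≠ z →
    cwAngle (x - y) (z - y) ∈ goodAngles ε)

/-- The `i`-th vertex of a path (with junk value `0` out of range). -/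
def nth (γ : List Pt) (i : ℕ) : Pt := γ.getD i 0

/-- The interior angle `θ_{i+2} = θ_{x_{i+2}, x_{i+1}, x_i}` of a path (`0`-based). -/
noncomputable def pathAngle (γ : List Pt) (i : ℕ) : ℝ :=
  cwAngle (nth γ (i + 2) - nth γ (i + 1)) (nth γ i - nth γ (i + 1))

/-- The list of (unordered) edges of a path. -/
def pathEdges (γ : List Pt) : List (Sym2 Pt) := (γ.zip γ.tail).map (fun p => s(p.1, p.2))

/-- A straight path of the graph `G`. -/
def IsStraightPath (ε : ℝ) (G : BondGraph) (γ : List Pt) : Prop :=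
  2 ≤ γ.length ∧
  (∀ x ∈ γ, x ∈ G.V) ∧
  γ.Chain' (fun a b => s(a, b) ∈ G.E) ∧
  (∀ i : ℕ, i + 2 < γ.length → pathAngle γ i ∈ Set.Icc (π - ε) (π + ε)) ∧
  (pathEdges γ).Nodup

/-- A path is closed if its first and last points coincide. -/
def IsClosedPath (γ : List Pt) : Prop := γ.head? = γ.getLast?

/-- The angle excess `θ_ex(γ)` of a path. -/
noncomputable def thetaEx (γ : List Pt) : ℝ :=
  ∑ i ∈ Finset.range (γ.length - 2), |pathAngle γ i - π|

/-- Two lists are identified if they agree up to reversal. -/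
def revSetoid : Setoid (List Pt) where
  r a b := a = b ∨ a = b.reverse
  iseqv := by
    constructor
    · intro a; exact Or.inl rfl
    · intro a b h
      rcases h with h | h
      · exact Or.inl h.symm
      · right; rw [h, List.reverse_reverse]
    · intro a b c hab hbc
      rcases hab with h | h <;> rcases hbc with h' | h' <;>
        simp [h, h', List.reverse_reverse]

/-- An (undirected) stratum: a list of points up to reversal. -/
def Stratum : Type := Quotient revSetoid

/-- The length `l(s)` of a stratum. -/
def Stratum.len : Stratum → ℕ :=
  Quotient.lift List.length (by rintro a b (rfl | rfl) <;> simp)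

/-- The set of vertices of a stratum. -/
def Stratum.verts : Stratum → Set Pt :=
  Quotient.lift (fun l => {x : Pt | x ∈ l}) (by
    rintro a b (rfl | rfl)
    · rfl
    · ext x; simp)

/-- `γ` is a subpath of `γ'`, up to reversal. -/
def SubPathUpToRev (γ γ' : List Pt) : Prop := γ <:+: γ' ∨ γ <:+: γ'.reverse

/-- A maximal straight path (maximal with respect to inclusion). -/
def IsMaximalStraight (ε : ℝ) (G : BondGraph) (γ : List Pt) : Prop :=
  IsStraightPath ε G γ ∧
    ∀ γ' : List Pt, IsStraightPath ε G γ' → SubPathUpToRev γ γ' →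
      (γ' = γ ∨ γ' = γ.reverse)

/-- `x ∈ V₂^π`: a vertex of degree two whose bond angle lies in `[π−ε, π+ε]`. -/
def V2pi (ε : ℝ) (G : BondGraph) (x : Pt) : Prop :=
  x ∈ G.V ∧ ∃ x₁ x₂ : Pt, x₁ ≠ x₂ ∧ nbhd G x = {x₁, x₂} ∧
    cwAngle (x₁ - x) (x₂ - x) ∈ Set.Icc (π - ε) (π + ε)

/-- The set of strata `S(G)`: maximal straight paths, together with the degenerate
one-point stratum `(x)` counted twice for `x ∈ V₀` and once for `x ∈ V₁ ∪ V₂^π`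
(the `Fin 2` tag realizes the multiplicity). -/
def strataSet (ε : ℝ) (G : BondGraph) : Set (Stratum × Fin 2) :=
  {p | ∃ γ : List Pt, IsMaximalStraight ε G γ ∧ p = (Quotient.mk revSetoid γ, 0)}
  ∪ {p | ∃ x ∈ G.V, deg G x = 0 ∧
      (p = (Quotient.mk revSetoid [x], 0) ∨ p = (Quotient.mk revSetoid [x], 1))}
  ∪ {p | ∃ x ∈ G.V, (deg G x = 1 ∨ V2pi ε G x) ∧ p = (Quotient.mk revSetoid [x], 0)}

/-- The set of orthogonal strata `S^⊥(s)`. -/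
def orthStrata (ε : ℝ) (G : BondGraph) (s : Stratum × Fin 2) : Set (Stratum × Fin 2) :=
  {s' | s' ∈ strataSet ε G ∧ s' ≠ s ∧ (Stratum.verts s.1 ∩ Stratum.verts s'.1).Nonempty}

/-!
Since no straight path revisits a vertex, the length of a stratum is the number of its vertices, so
it suffices to show that every vertex `x` lies on exactly two strata, counted with multiplicity.

A maximal straight path is determined by any one of its edges, because an edge has at most one
straight continuation. Hence the maximal straight paths through `x` correspond to the neighbours of
`x` modulo straight continuation through `x`. Among any three edges at `x` two continue each other
straight, so there are at most two such paths: none if `x ∈ V₀`, one if `x ∈ V₁ ∪ V₂^π`, and two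
otherwise. The multiplicity of the degenerate stratum `(x)` supplements this number to two.
-/

/-! ### Clockwise angles -/

theorem complex_mk_ne_zero {u : Pt} (hu : u ≠ 0) : (⟨u 0, u 1⟩ : ℂ) ≠ 0 := by
  contrapose! hu
  rw [Complex.ext_iff] at hu
  ext i
  fin_cases i
  exacts [hu.1, hu.2]

theorem cwAngle_nonneg (u v : Pt) : 0 ≤ cwAngle u v := by
  have := Complex.neg_pi_lt_arg ((⟨u 0, u 1⟩ : ℂ) * (starRingEnd ℂ) (⟨v 0, v 1⟩ : ℂ))
  dsimp only [cwAngle]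
  split_ifs <;> linarith [Real.pi_pos]

theorem cwAngle_lt_two_pi (u v : Pt) : cwAngle u v < 2 * π := by
  have := Complex.arg_le_pi ((⟨u 0, u 1⟩ : ℂ) * (starRingEnd ℂ) (⟨v 0, v 1⟩ : ℂ))
  dsimp only [cwAngle]
  split_ifs <;> linarith [Real.pi_pos]

theorem cwAngle_self (u : Pt) : cwAngle u u = 0 := by
  dsimp only [cwAngle]
  rw [Complex.mul_conj, Complex.arg_ofReal_of_nonneg (Complex.normSq_nonneg _),
    if_neg (lt_irrefl 0)]

theorem cwAngle_zero_left (v : Pt) : cwAngle 0 v = 0 := by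
  have h : (⟨0, 0⟩ : ℂ) = 0 := rfl
  simp [cwAngle, h]

theorem cwAngle_zero_right (u : Pt) : cwAngle u 0 = 0 := by
  have h : (⟨0, 0⟩ : ℂ) = 0 := rfl
  simp [cwAngle, h]

theorem coe_cwAngle {u v : Pt} (hu : u ≠ 0) (hv : v ≠ 0) :
    (cwAngle u v : Real.Angle) =
      (Complex.arg ⟨u 0, u 1⟩ : Real.Angle) - (Complex.arg ⟨v 0, v 1⟩ : Real.Angle) := by
  rw [sub_eq_add_neg, ← Complex.arg_conj_coe_angle, ← Complex.arg_mul_coe_angle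
    (complex_mk_ne_zero hu) ((map_ne_zero (starRingEnd ℂ)).2 (complex_mk_ne_zero hv))]
  dsimp only [cwAngle]
  split_ifs <;> simp

theorem cwAngle_add_cwAngle {a b c : Pt} (ha : a ≠ 0) (hb : b ≠ 0) (hc : c ≠ 0) :
    cwAngle a b + cwAngle b c = cwAngle a c ∨
      cwAngle a b + cwAngle b c = cwAngle a c + 2 * π := by
  have hmod : ((cwAngle a b + cwAngle b c : ℝ) : Real.Angle) = (cwAngle a c : ℝ) := by
    rw [Real.Angle.coe_add, coe_cwAngle ha hb, coe_cwAngle hb hc, coe_cwAngle ha hc,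
      sub_add_sub_cancel]
  obtain ⟨k, hk⟩ := Real.Angle.angle_eq_iff_two_pi_dvd_sub.1 hmod
  have hab := cwAngle_nonneg a b
  have hbc := cwAngle_nonneg b c
  have hac := cwAngle_nonneg a c
  have hab' := cwAngle_lt_two_pi a b
  have hbc' := cwAngle_lt_two_pi b c
  have hac' := cwAngle_lt_two_pi a c
  have hk_gt : (-1 : ℝ) < k := by
    by_contra!
    nlinarith [Real.pi_pos]
  have hk_lt : (k : ℝ) < 2 := by
    by_contra!
    nlinarith [Real.pi_pos]
  obtain rfl | rfl : k = 0 ∨ k = 1 := by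
    have : -1 < k := by exact_mod_cast hk_gt
    have : k < 2 := by exact_mod_cast hk_lt
    lia
  · left
    push_cast at hk
    linarith
  · right
    push_cast at hk
    linarith

theorem cwAngle_swap {u v : Pt} (h : cwAngle u v ≠ 0) : cwAngle v u = 2 * π - cwAngle u v := by
  have hu : u ≠ 0 := by
    rintro rfl
    exact h (cwAngle_zero_left v)
  have hv : v ≠ 0 := by
    rintro rfl
    exact h (cwAngle_zero_right u)
  have hpos := (cwAngle_nonneg u v).lt_of_ne' h
  have hnonneg := cwAngle_nonneg v u
  rcases cwAngle_add_cwAngle hu hv hu with hsum | hsum <;> rw [cwAngle_self] at hsum <;> linarith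

theorem cwAngle_swap_mem_Icc {ε : ℝ} (hε : ε < π) {u v : Pt}
    (h : cwAngle u v ∈ Set.Icc (π - ε) (π + ε)) : cwAngle v u ∈ Set.Icc (π - ε) (π + ε) := by
  obtain ⟨hl, hr⟩ := h
  rw [cwAngle_swap (by linarith)]
  constructor <;> linarith

theorem mem_Icc_of_mem_goodAngles {ε : ℝ} (hε : ε < π / 6) {a b c : Pt}
    (ha : a ≠ 0) (hb : b ≠ 0) (hc : c ≠ 0) (hab : cwAngle a b ∈ goodAngles ε)
    (hbc : cwAngle b c ∈ goodAngles ε) (hac : cwAngle a c ∈ goodAngles ε) :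
    cwAngle a b ∈ Set.Icc (π - ε) (π + ε) ∨ cwAngle b c ∈ Set.Icc (π - ε) (π + ε) ∨
      cwAngle a c ∈ Set.Icc (π - ε) (π + ε) := by
  -- If `cwAngle a b` and `cwAngle b c` are both within `ε` of a right angle modulo `π`, then
  -- `cwAngle a c` is within `2 * ε` of a multiple of `π`, and `2 * ε < π / 2 - ε`.
  by_contra! hnot
  obtain ⟨hab', hbc', hac'⟩ := hnot
  have right_angle {θ : ℝ} (hθ : θ ∈ goodAngles ε) (hθ' : θ ∉ Set.Icc (π - ε) (π + ε)) :
      θ ∈ Set.Icc (π / 2 - ε) (π / 2 + ε) ∨ θ ∈ Set.Icc (3 * π / 2 - ε) (3 * π / 2 + ε) := by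
    rcases hθ with (hθ | hθ) | hθ
    exacts [.inl hθ, absurd hθ hθ', .inr hθ]
  rcases right_angle hab hab' with ⟨_, _⟩ | ⟨_, _⟩ <;>
  rcases right_angle hbc hbc' with ⟨_, _⟩ | ⟨_, _⟩ <;>
  rcases right_angle hac hac' with ⟨_, _⟩ | ⟨_, _⟩ <;>
  rcases cwAngle_add_cwAngle ha hb hc with hsum | hsum <;>
  linarith

/-! ### Straight continuations of an edge -/

/-- The angular part of `ε`-regularity: any two edges meeting at a vertex enclose an angle close
to a right or straight angle. -/
def GoodBondAngles (ε : ℝ) (G : BondGraph) : Prop :=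
  ∀ y, (nbhd G y).Pairwise fun x z => cwAngle (x - y) (z - y) ∈ goodAngles ε

/-- The edge from `u` to `v` continues straight to `w`, that is, `u`, `v`, `w` may occur as
consecutive vertices of a straight path. -/
def StraightAt (ε : ℝ) (G : BondGraph) (u v w : Pt) : Prop :=
  u ∈ nbhd G v ∧ w ∈ nbhd G v ∧ cwAngle (w - v) (u - v) ∈ Set.Icc (π - ε) (π + ε)

section Continuation

variable {ε : ℝ} {G : BondGraph}

theorem mem_nbhd_comm {x y : Pt} : x ∈ nbhd G y ↔ y ∈ nbhd G x := by
  simp only [nbhd, Set.mem_ofPred_eq, Sym2.eq_swap]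

theorem ne_of_mem_nbhd {x y : Pt} (h : x ∈ nbhd G y) : x ≠ y :=
  fun e => G.not_diag _ h (Sym2.mk_isDiag_iff.2 e.symm)

theorem mem_V_of_mem_nbhd {x y : Pt} (h : x ∈ nbhd G y) : x ∈ G.V :=
  G.mem_V _ h x (Sym2.mem_mk_right y x)

theorem nbhd_finite (x : Pt) : (nbhd G x).Finite :=
  G.finV.subset fun _ => mem_V_of_mem_nbhd

theorem EpsRegular.goodBondAngles (h : EpsRegular ε G) : GoodBondAngles ε G :=
  fun y x hx z hz => h.2 x y z (mem_nbhd_comm.1 hx) (mem_nbhd_comm.1 hz)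

theorem StraightAt.symm (hε : ε < π) {u v w : Pt} (h : StraightAt ε G u v w) :
    StraightAt ε G w v u :=
  ⟨h.2.1, h.1, cwAngle_swap_mem_Icc hε h.2.2⟩

theorem StraightAt.ne (hε : ε < π) {u v w : Pt} (h : StraightAt ε G u v w) : u ≠ w := by
  rintro rfl
  have := h.2.2.1
  rw [cwAngle_self] at this
  linarith

theorem StraightAt.unique (hε : ε < π / 6) (hang : GoodBondAngles ε G) {u v w w' : Pt}
    (h : StraightAt ε G u v w) (h' : StraightAt ε G u v w') : w = w' := by
  by_contra hne
  obtain ⟨hu, hw, _, _⟩ := h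
  obtain ⟨-, hw', _, _⟩ := h'
  have hsum := cwAngle_add_cwAngle (sub_ne_zero.2 (ne_of_mem_nbhd hw))
    (sub_ne_zero.2 (ne_of_mem_nbhd hw')) (sub_ne_zero.2 (ne_of_mem_nbhd hu))
  rcases hang v hw hw' hne with (⟨_, _⟩ | ⟨_, _⟩) | ⟨_, _⟩ <;>
    rcases hsum with hsum | hsum <;> linarith

theorem GoodBondAngles.exists_straightAt (hε : ε < π / 6) (hang : GoodBondAngles ε G)
    {x a b c : Pt} (ha : a ∈ nbhd G x) (hb : b ∈ nbhd G x) (hc : c ∈ nbhd G x)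
    (hab : a ≠ b) (hbc : b ≠ c) (hac : a ≠ c) :
    StraightAt ε G b x a ∨ StraightAt ε G c x b ∨ StraightAt ε G c x a :=
  (mem_Icc_of_mem_goodAngles hε (sub_ne_zero.2 (ne_of_mem_nbhd ha))
    (sub_ne_zero.2 (ne_of_mem_nbhd hb)) (sub_ne_zero.2 (ne_of_mem_nbhd hc))
    (hang x ha hb hab) (hang x hb hc hbc) (hang x ha hc hac)).imp
      (⟨hb, ha, ·⟩) (Or.imp (⟨hc, hb, ·⟩) (⟨hc, ha, ·⟩))

end Continuation

/-! ### Consecutive entries of a list -/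

section Infix

variable {α : Type*} {l : List α}

theorem isChain_iff_forall_pair_infix {R : α → α → Prop} :
    l.IsChain R ↔ ∀ a b, [a, b] <:+: l → R a b := by
  rw [List.isChain_iff_forall_rel_of_append_cons_cons]
  refine ⟨?_, fun h a b A B hl => h a b ⟨A, B, by simp [hl]⟩⟩
  rintro h a b ⟨A, B, hl⟩
  exact h (l₁ := A) (l₂ := B) (by simp [← hl])

theorem exists_pair_infix_of_mem (hl : 2 ≤ l.length) {x : α} (hx : x ∈ l) :
    ∃ y, [x, y] <:+: l ∨ [y, x] <:+: l := by
  obtain ⟨A, B, rfl⟩ := List.append_of_mem hx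
  cases B with
  | cons y B => exact ⟨y, .inl ⟨A, B, by simp⟩⟩
  | nil =>
    rcases List.eq_nil_or_concat A with rfl | ⟨A, y, rfl⟩
    · simp at hl
    · exact ⟨y, .inr ⟨A, [], by simp⟩⟩

theorem nodup_of_forall_not_infix (h : ∀ a m, ¬ (a :: m ++ [a]) <:+: l) : l.Nodup := by
  induction l with
  | nil => exact List.nodup_nil
  | cons a l ih =>
    refine List.nodup_cons.2 ⟨fun ha => ?_, ih fun b m hm => h b m (List.infix_cons hm)⟩
    obtain ⟨s, t, rfl⟩ := List.append_of_mem ha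
    exact h a s ⟨[], t, by simp⟩

theorem append_cons_inj_of_nodup {A B A' B' : List α} {x : α} (hnd : (A ++ x :: B).Nodup)
    (h : A ++ x :: B = A' ++ x :: B') : A = A' ∧ B = B' := by
  rw [List.nodup_middle, List.nodup_cons, List.mem_append, not_or] at hnd
  have hinj := (List.append_cons_inj_of_notMem hnd.1.1 hnd.1.2).1 h
  exact ⟨hinj.1, hinj.2.2⟩

theorem eq_of_pair_infix_of_nodup (hl : l.Nodup) {x y z : α} (hy : [x, y] <:+: l)
    (hz : [x, z] <:+: l) : y = z := by
  obtain ⟨A, B, rfl⟩ := hy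
  obtain ⟨A', B', h⟩ := hz
  have := (append_cons_inj_of_nodup (A := A) (A' := A') (x := x) (B := y :: B) (B' := z :: B')
    (by simpa using hl) (by simpa using h.symm)).2
  exact (List.cons.inj this).1

theorem triple_infix_of_nodup (hl : l.Nodup) {x y z : α} (hx : [x, y] <:+: l)
    (hz : [y, z] <:+: l) : [x, y, z] <:+: l := by
  obtain ⟨A, B, rfl⟩ := hx
  obtain ⟨A', B', h⟩ := hz
  have := (append_cons_inj_of_nodup (A := A ++ [x]) (A' := A') (x := y) (B := B)
    (B' := z :: B') (by simpa using hl) (by simpa using h.symm)).2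
  exact ⟨A, B', by simp [this]⟩

theorem finite_setOf_nodup_subset {s : Set α} (hs : s.Finite) :
    {l : List α | l.Nodup ∧ ∀ x ∈ l, x ∈ s}.Finite := by
  have := hs.fintype
  refine ((List.finite_length_le s (Fintype.card s)).image (List.map Subtype.val)).subset ?_
  rintro l ⟨hl, hls⟩
  lift l to List s using hls
  exact ⟨l, (List.Nodup.of_map _ hl).length_le_card, rfl⟩

end Infix

/-! ### Edges of a path -/

section PathEdges

theorem pathEdges_cons_cons (a b : Pt) (l : List Pt) :
    pathEdges (a :: b :: l) = s(a, b) :: pathEdges (b :: l) := rfl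

theorem pathEdges_append_cons (l m : List Pt) (a : Pt) :
    pathEdges (l ++ a :: m) = pathEdges (l ++ [a]) ++ pathEdges (a :: m) := by
  induction l with
  | nil => rfl
  | cons b l ih => cases l <;> simp_all [pathEdges]

theorem pathEdges_concat_concat (l : List Pt) (a b : Pt) :
    pathEdges (l ++ [a, b]) = pathEdges (l ++ [a]) ++ [s(a, b)] :=
  pathEdges_append_cons l [b] a

theorem pathEdges_reverse (l : List Pt) : pathEdges l.reverse = (pathEdges l).reverse := by
  match l with
  | [] => rfl
  | [_] => rfl
  | a :: b :: l =>
    have ih := pathEdges_reverse (b :: l)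
    rw [List.reverse_cons] at ih
    rw [pathEdges_cons_cons, List.reverse_cons (as := pathEdges _), ← ih, List.reverse_cons,
      List.reverse_cons, List.append_assoc, List.singleton_append, pathEdges_concat_concat,
      Sym2.eq_swap]

theorem pathEdges_prefix {l m : List Pt} (h : l <+: m) : pathEdges l <+: pathEdges m := by
  obtain ⟨t, rfl⟩ := h
  rcases List.eq_nil_or_concat l with rfl | ⟨l, a, rfl⟩
  · exact List.nil_prefix
  · rw [List.concat_eq_append, List.append_assoc, List.singleton_append, pathEdges_append_cons l t]
    exact List.prefix_append _ _

theorem pathEdges_infix {l m : List Pt} (h : l <:+: m) : pathEdges l <:+: pathEdges m := by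
  obtain ⟨t, hlt, htm⟩ := List.infix_iff_prefix_suffix.1 h
  have hrev := pathEdges_prefix (List.reverse_prefix.2 htm)
  rw [pathEdges_reverse, pathEdges_reverse, List.reverse_prefix] at hrev
  exact (pathEdges_prefix hlt).isInfix.trans hrev.isInfix

theorem mem_of_mem_pathEdges {l : List Pt} {e : Sym2 Pt} (he : e ∈ pathEdges l) {x : Pt}
    (hx : x ∈ e) : x ∈ l := by
  obtain ⟨⟨a, b⟩, hab, rfl⟩ := List.mem_map.1 he
  obtain ⟨ha, hb⟩ := List.of_mem_zip hab
  rcases Sym2.mem_iff.1 hx with rfl | rfl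
  exacts [ha, List.mem_of_mem_tail hb]

end PathEdges

/-! ### Straight paths -/

/-- Every straight path of the graph is open. In particular none of them revisits a vertex. -/
def OnlyOpenPaths (ε : ℝ) (G : BondGraph) : Prop :=
  ∀ γ : List Pt, IsStraightPath ε G γ → ¬ IsClosedPath γ

section StraightPath

variable {ε : ℝ} {G : BondGraph} {γ δ : List Pt}

theorem forall_pathAngle_mem_iff {S : Set ℝ} :
    (∀ i : ℕ, i + 2 < γ.length → pathAngle γ i ∈ S) ↔
      ∀ u v w, [u, v, w] <:+: γ → cwAngle (w - v) (u - v) ∈ S := by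
  constructor
  · rintro h u v w ⟨A, B, rfl⟩
    simpa [pathAngle, nth, List.getD_eq_getElem?_getD, List.getElem?_append_right] using
      h A.length (by simp)
  · intro h i hi
    simpa [pathAngle, nth, List.getD_eq_getElem?_getD, hi, show i < γ.length by lia,
      show i + 1 < γ.length by lia] using
      h γ[i] γ[i + 1] γ[i + 2] ⟨γ.take i, γ.drop (i + 3), by simp⟩

theorem isStraightPath_iff : IsStraightPath ε G γ ↔
    2 ≤ γ.length ∧ (∀ u v, [u, v] <:+: γ → v ∈ nbhd G u) ∧
      (∀ u v w, [u, v, w] <:+: γ → StraightAt ε G u v w) ∧ (pathEdges γ).Nodup := by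
  unfold IsStraightPath
  rw [forall_pathAngle_mem_iff]
  refine and_congr_right fun hlen => ⟨?_, ?_⟩
  · rintro ⟨-, hchain, hangle, hedges⟩
    have hadj := isChain_iff_forall_pair_infix.1 hchain
    exact ⟨hadj, fun u v w h => ⟨mem_nbhd_comm.1 (hadj u v (.trans ⟨[], [w], rfl⟩ h)),
      hadj v w (.trans ⟨[u], [], rfl⟩ h), hangle u v w h⟩, hedges⟩
  · rintro ⟨hadj, hstraight, hedges⟩
    refine ⟨fun x hx => ?_, isChain_iff_forall_pair_infix.2 hadj,
      fun u v w h => (hstraight u v w h).2.2, hedges⟩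
    obtain ⟨y, hxy | hyx⟩ := exists_pair_infix_of_mem hlen hx
    exacts [mem_V_of_mem_nbhd (mem_nbhd_comm.1 (hadj x y hxy)), mem_V_of_mem_nbhd (hadj y x hyx)]

theorem isStraightPath_pair {x y : Pt} (h : y ∈ nbhd G x) : IsStraightPath ε G [x, y] := by
  refine isStraightPath_iff.2 ⟨le_rfl, fun u v huv => ?_, fun u v w huvw => ?_, by simp [pathEdges]⟩
  · obtain ⟨rfl, rfl⟩ : u = x ∧ v = y := by simpa using huv.eq_of_length rfl
    exact h
  · exact absurd huvw.length_le (by simp)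

namespace IsStraightPath

theorem mem_nbhd (h : IsStraightPath ε G γ) {u v : Pt} (huv : [u, v] <:+: γ) : v ∈ nbhd G u :=
  (isStraightPath_iff.1 h).2.1 u v huv

theorem straightAt (h : IsStraightPath ε G γ) {u v w : Pt} (huvw : [u, v, w] <:+: γ) :
    StraightAt ε G u v w :=
  (isStraightPath_iff.1 h).2.2.1 u v w huvw

theorem reverse (hε : ε < π) (h : IsStraightPath ε G γ) : IsStraightPath ε G γ.reverse := by
  obtain ⟨hlen, hadj, hstraight, hedges⟩ := isStraightPath_iff.1 h
  refine isStraightPath_iff.2 ⟨by simpa using hlen, fun u v huv => ?_, fun u v w huvw => ?_, ?_⟩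
  · exact mem_nbhd_comm.1 (hadj v u (List.reverse_infix.1 (by simpa using huv)))
  · exact (hstraight w v u (List.reverse_infix.1 (by simpa using huvw))).symm hε
  · rwa [pathEdges_reverse, List.nodup_reverse]

theorem of_infix (h : IsStraightPath ε G γ) (hδ : δ <:+: γ) (hlen : 2 ≤ δ.length) :
    IsStraightPath ε G δ := by
  obtain ⟨-, hadj, hstraight, hedges⟩ := isStraightPath_iff.1 h
  exact isStraightPath_iff.2 ⟨hlen, fun u v huv => hadj u v (huv.trans hδ),
    fun u v w huvw => hstraight u v w (huvw.trans hδ), hedges.sublist (pathEdges_infix hδ).sublist⟩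

theorem nodup (hopen : OnlyOpenPaths ε G) (h : IsStraightPath ε G γ) : γ.Nodup := by
  refine nodup_of_forall_not_infix fun a m ham => ?_
  refine hopen _ (h.of_infix ham (by simp)) ?_
  rw [IsClosedPath, List.getLast?_concat]
  rfl

theorem pathEdges_concat_nodup (hε : ε < π) (hopen : OnlyOpenPaths ε G)
    (h : IsStraightPath ε G γ) {u v w : Pt} (huv : [u, v] <:+ γ) (hs : StraightAt ε G u v w) :
    (pathEdges (γ ++ [w])).Nodup := by
  have hγ := h.nodup hopen
  obtain ⟨A, rfl⟩ := huv
  have hv : v ∉ A ++ [u] := by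
    have : (A ++ [u] ++ [v]).Nodup := by simpa using hγ
    simpa using List.disjoint_of_nodup_append this
  have hsplit : pathEdges (A ++ [u, v] ++ [w]) = pathEdges (A ++ [u, v]) ++ [s(v, w)] := by
    simpa using pathEdges_concat_concat (A ++ [u]) v w
  rw [hsplit, ← List.concat_eq_append, List.nodup_concat]
  refine ⟨?_, (isStraightPath_iff.1 h).2.2.2⟩
  rw [pathEdges_concat_concat, List.mem_append, List.mem_singleton, not_or]
  refine ⟨fun hmem => hv (mem_of_mem_pathEdges hmem (Sym2.mem_mk_left v w)), fun heq => ?_⟩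
  rw [Sym2.eq_swap, Sym2.congr_left] at heq
  exact hs.ne hε heq.symm

theorem concat (hε : ε < π) (hopen : OnlyOpenPaths ε G) (h : IsStraightPath ε G γ) {u v w : Pt}
    (huv : [u, v] <:+ γ) (hs : StraightAt ε G u v w) : IsStraightPath ε G (γ ++ [w]) := by
  have hedges := h.pathEdges_concat_nodup hε hopen huv hs
  obtain ⟨A, rfl⟩ := huv
  refine isStraightPath_iff.2 ⟨by simp, fun a b hab => ?_, fun a b c habc => ?_, hedges⟩
  · rcases List.infix_concat_iff.1 hab with hab | hab
    · obtain ⟨rfl, rfl⟩ : a = v ∧ b = w := by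
        rw [← List.reverse_prefix] at hab
        simp_all
      exact hs.2.1
    · exact h.mem_nbhd hab
  · rcases List.infix_concat_iff.1 habc with habc | habc
    · obtain ⟨rfl, rfl, rfl⟩ : a = u ∧ b = v ∧ c = w := by
        rw [← List.reverse_prefix] at habc
        simp_all
      exact hs
    · exact h.straightAt habc

end IsStraightPath

end StraightPath

/-! ### Maximal straight paths -/

section MaximalStraight

variable {ε : ℝ} {G : BondGraph} {γ δ : List Pt}

theorem finite_setOf_isStraightPath (hopen : OnlyOpenPaths ε G) :
    {γ | IsStraightPath ε G γ}.Finite :=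
  (finite_setOf_nodup_subset G.finV).subset fun _ hγ => ⟨hγ.nodup hopen, hγ.2.1⟩

theorem IsStraightPath.exists_isMaximalStraight (hε : ε < π) (hopen : OnlyOpenPaths ε G)
    (h : IsStraightPath ε G δ) : ∃ γ, IsMaximalStraight ε G γ ∧ δ <:+: γ := by
  obtain ⟨γ, ⟨hγ, hδγ⟩, hmax⟩ := Set.exists_max_image {γ | IsStraightPath ε G γ ∧ δ <:+: γ}
    List.length ((finite_setOf_isStraightPath hopen).subset fun _ hγ => hγ.1)
    ⟨δ, h, List.infix_rfl⟩
  refine ⟨γ, ⟨hγ, fun γ' hγ' hsub => ?_⟩, hδγ⟩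
  rcases hsub with hsub | hsub
  · exact .inl (hsub.eq_of_length_le (hmax γ' ⟨hγ', hδγ.trans hsub⟩)).symm
  · right
    rw [hsub.eq_of_length_le (hmax γ'.reverse ⟨hγ'.reverse hε, hδγ.trans hsub⟩),
      List.reverse_reverse]

namespace IsMaximalStraight

theorem reverse (hε : ε < π) (h : IsMaximalStraight ε G γ) : IsMaximalStraight ε G γ.reverse := by
  refine ⟨h.1.reverse hε, fun γ' hγ' hsub => ?_⟩
  rw [List.reverse_reverse]
  refine (h.2 γ' hγ' ?_).symm
  rcases hsub with hsub | hsub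
  · exact .inr (List.reverse_infix.1 (by simpa using hsub))
  · exact .inl (List.reverse_infix.1 hsub)

theorem not_straightAt (hε : ε < π) (hopen : OnlyOpenPaths ε G) (h : IsMaximalStraight ε G γ)
    {u v w : Pt} (huv : [u, v] <:+ γ) : ¬ StraightAt ε G u v w := by
  intro hs
  have hlen : (γ ++ [w]).length = γ.length := by
    rcases h.2 _ (h.1.concat hε hopen huv hs) (.inl ⟨[], [w], rfl⟩) with heq | heq <;> rw [heq]
    exact List.length_reverse
  simp at hlen

theorem prefix_of_isStraightPath (hε : ε < π / 6) (hang : GoodBondAngles ε G)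
    (hopen : OnlyOpenPaths ε G) {A A' B B' : List Pt} {u v : Pt}
    (h : IsMaximalStraight ε G (A ++ u :: v :: B)) (h' : IsStraightPath ε G (A' ++ u :: v :: B')) :
    B' <+: B := by
  induction B' generalizing A A' B u v with
  | nil => exact List.nil_prefix
  | cons w B' ih =>
    have hs : StraightAt ε G u v w := h'.straightAt ⟨A', B', by simp⟩
    cases B with
    | nil => exact absurd hs (h.not_straightAt (by linarith [Real.pi_pos]) hopen ⟨A, rfl⟩)
    | cons w' B =>
      have hs' : StraightAt ε G u v w' := h.1.straightAt ⟨A, B, by simp⟩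
      obtain rfl := hs.unique hε hang hs'
      refine (List.prefix_cons_inj w).2
        (ih (A := A ++ [u]) (A' := A' ++ [u]) (u := v) (v := w) ?_ ?_)
      · simpa using h
      · simpa using h'

theorem infix_of_isStraightPath (hε : ε < π / 6) (hang : GoodBondAngles ε G)
    (hopen : OnlyOpenPaths ε G) (h : IsMaximalStraight ε G γ) (hδ : IsStraightPath ε G δ)
    {u v : Pt} (hu : [u, v] <:+: γ) (hu' : [u, v] <:+: δ) : δ <:+: γ := by
  have hεπ : ε < π := by linarith [Real.pi_pos]
  obtain ⟨A, B, rfl⟩ := hu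
  obtain ⟨A', B', rfl⟩ := hu'
  have hsuffix : A'.reverse <+: A.reverse :=
    prefix_of_isStraightPath hε hang hopen (A := B.reverse) (A' := B'.reverse) (u := v) (v := u)
      (by simpa using h.reverse hεπ) (by simpa using hδ.reverse hεπ)
  have hprefix : B' <+: B :=
    prefix_of_isStraightPath hε hang hopen (A := A) (A' := A') (u := u) (v := v)
      (by simpa using h) (by simpa using hδ)
  obtain ⟨C, rfl⟩ := List.reverse_prefix.1 hsuffix
  obtain ⟨D, rfl⟩ := hprefix
  exact ⟨C, D, by simp⟩

theorem eq_of_pair_infix (hε : ε < π / 6) (hang : GoodBondAngles ε G) (hopen : OnlyOpenPaths ε G)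
    (h : IsMaximalStraight ε G γ) (h' : IsMaximalStraight ε G δ) {u v : Pt}
    (hu : [u, v] <:+: γ) (hu' : [u, v] <:+: δ) : γ = δ :=
  antisymm (r := (· <:+: ·)) (h'.infix_of_isStraightPath hε hang hopen h.1 hu' hu)
    (h.infix_of_isStraightPath hε hang hopen h'.1 hu hu')

end IsMaximalStraight

end MaximalStraight

/-! ### Strata through a vertex -/

/-- The stratum represented by a list of points. -/
def Stratum.mk (γ : List Pt) : Stratum :=
  Quotient.mk revSetoid γ

/-- The stratum of the maximal straight path containing the edge from `x` to `y`; a junk value if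
`x` and `y` are not adjacent. -/
def edgeStratum (ε : ℝ) (G : BondGraph) (x y : Pt) : Stratum :=
  Stratum.mk (Classical.epsilon fun γ => IsMaximalStraight ε G γ ∧ [x, y] <:+: γ)

/-- The strata through `x` that come from maximal straight paths. -/
def pathStrata (ε : ℝ) (G : BondGraph) (x : Pt) : Set Stratum :=
  {s | ∃ γ, IsMaximalStraight ε G γ ∧ x ∈ γ ∧ s = Stratum.mk γ}

/-- The tags in `Fin 2` with which the degenerate stratum `(x)` occurs in `S(G)`. Their number is
its multiplicity. -/
def pointTags (ε : ℝ) (G : BondGraph) (x : Pt) : Set (Fin 2) :=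
  {i | deg G x = 0 ∨ (deg G x = 1 ∨ V2pi ε G x) ∧ i = 0}

section Strata

variable {ε : ℝ} {G : BondGraph} {γ δ : List Pt} {x y z : Pt}

theorem Stratum.mk_eq_mk_iff : Stratum.mk γ = Stratum.mk δ ↔ γ = δ ∨ γ = δ.reverse :=
  Quotient.eq

theorem Stratum.mk_reverse : Stratum.mk γ.reverse = Stratum.mk γ :=
  Stratum.mk_eq_mk_iff.2 (.inr rfl)

theorem IsMaximalStraight.edgeStratum_eq (hε : ε < π / 6) (hang : GoodBondAngles ε G)
    (hopen : OnlyOpenPaths ε G) (h : IsMaximalStraight ε G γ) (hxy : [x, y] <:+: γ) :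
    edgeStratum ε G x y = Stratum.mk γ := by
  obtain ⟨hmax, hxy'⟩ := Classical.epsilon_spec
    (p := fun γ => IsMaximalStraight ε G γ ∧ [x, y] <:+: γ) ⟨γ, h, hxy⟩
  exact congrArg Stratum.mk (hmax.eq_of_pair_infix hε hang hopen h hxy' hxy)

theorem exists_isMaximalStraight_pair (hε : ε < π) (hopen : OnlyOpenPaths ε G)
    (hy : y ∈ nbhd G x) : ∃ γ, IsMaximalStraight ε G γ ∧ [x, y] <:+: γ :=
  (isStraightPath_pair hy).exists_isMaximalStraight hε hopen

theorem StraightAt.edgeStratum_eq (hε : ε < π / 6) (hang : GoodBondAngles ε G)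
    (hopen : OnlyOpenPaths ε G) (h : StraightAt ε G y x z) :
    edgeStratum ε G x y = edgeStratum ε G x z := by
  have hεπ : ε < π := by linarith [Real.pi_pos]
  have hyxz : IsStraightPath ε G [y, x, z] :=
    (isStraightPath_pair (mem_nbhd_comm.1 h.1)).concat hεπ hopen List.suffix_rfl h
  obtain ⟨γ, hγ, hsub⟩ := hyxz.exists_isMaximalStraight hεπ hopen
  have hyx : [y, x] <:+: γ := .trans ⟨[], [z], rfl⟩ hsub
  have hxz : [x, z] <:+: γ := .trans ⟨[y], [], rfl⟩ hsub
  rw [hγ.edgeStratum_eq hε hang hopen hxz,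
    (hγ.reverse hεπ).edgeStratum_eq hε hang hopen (List.reverse_infix.2 hyx),
    Stratum.mk_reverse]

theorem edgeStratum_eq_iff (hε : ε < π / 6) (hang : GoodBondAngles ε G)
    (hopen : OnlyOpenPaths ε G) (hy : y ∈ nbhd G x) (hz : z ∈ nbhd G x) :
    edgeStratum ε G x y = edgeStratum ε G x z ↔ y = z ∨ StraightAt ε G y x z := by
  constructor
  · intro heq
    have hεπ : ε < π := by linarith [Real.pi_pos]
    obtain ⟨γ, hγ, hxy⟩ := exists_isMaximalStraight_pair hεπ hopen hy
    obtain ⟨δ, hδ, hxz⟩ := exists_isMaximalStraight_pair hεπ hopen hz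
    have hnodup := hδ.1.nodup hopen
    rw [hγ.edgeStratum_eq hε hang hopen hxy, hδ.edgeStratum_eq hε hang hopen hxz,
      Stratum.mk_eq_mk_iff] at heq
    rcases heq with rfl | rfl
    · exact .inl (eq_of_pair_infix_of_nodup hnodup hxy hxz)
    · have hyx : [y, x] <:+: δ := List.reverse_infix.1 hxy
      exact .inr (hδ.1.straightAt (triple_infix_of_nodup hnodup hyx hxz))
  · rintro (rfl | h)
    exacts [rfl, h.edgeStratum_eq hε hang hopen]

theorem pathStrata_eq_image (hε : ε < π / 6) (hang : GoodBondAngles ε G)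
    (hopen : OnlyOpenPaths ε G) : pathStrata ε G x = edgeStratum ε G x '' nbhd G x := by
  have hεπ : ε < π := by linarith [Real.pi_pos]
  ext s
  constructor
  · rintro ⟨γ, hγ, hx, rfl⟩
    obtain ⟨y, hxy | hyx⟩ := exists_pair_infix_of_mem hγ.1.1 hx
    · exact ⟨y, hγ.1.mem_nbhd hxy, hγ.edgeStratum_eq hε hang hopen hxy⟩
    · refine ⟨y, mem_nbhd_comm.1 (hγ.1.mem_nbhd hyx), ?_⟩
      rw [(hγ.reverse hεπ).edgeStratum_eq hε hang hopen (List.reverse_infix.2 hyx),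
        Stratum.mk_reverse]
  · rintro ⟨y, hy, rfl⟩
    obtain ⟨γ, hγ, hxy⟩ := exists_isMaximalStraight_pair hεπ hopen hy
    exact ⟨γ, hγ, hxy.subset (by simp), hγ.edgeStratum_eq hε hang hopen hxy⟩

theorem ncard_pathStrata_le_two (hε : ε < π / 6) (hang : GoodBondAngles ε G)
    (hopen : OnlyOpenPaths ε G) : (pathStrata ε G x).ncard ≤ 2 := by
  rw [pathStrata_eq_image hε hang hopen]
  by_contra! hlt
  obtain ⟨_, _, _, ⟨a, ha, rfl⟩, ⟨b, hb, rfl⟩, ⟨c, hc, rfl⟩, hab, hac, hbc⟩ :=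
    (Set.two_lt_ncard_iff ((nbhd_finite x).image _)).1 hlt
  rcases hang.exists_straightAt hε ha hb hc (ne_of_apply_ne _ hab) (ne_of_apply_ne _ hbc)
    (ne_of_apply_ne _ hac) with h | h | h
  · exact hab (h.edgeStratum_eq hε hang hopen).symm
  · exact hbc (h.edgeStratum_eq hε hang hopen).symm
  · exact hac (h.edgeStratum_eq hε hang hopen).symm

theorem ncard_pathStrata_eq_zero_iff (hε : ε < π / 6) (hang : GoodBondAngles ε G)
    (hopen : OnlyOpenPaths ε G) : (pathStrata ε G x).ncard = 0 ↔ deg G x = 0 := by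
  rw [pathStrata_eq_image hε hang hopen, deg, Set.ncard_eq_zero ((nbhd_finite x).image _),
    Set.image_eq_empty, Set.ncard_eq_zero (nbhd_finite x)]

theorem ncard_pathStrata_eq_one_iff (hε : ε < π / 6) (hang : GoodBondAngles ε G)
    (hopen : OnlyOpenPaths ε G) :
    (pathStrata ε G x).ncard = 1 ↔ deg G x = 1 ∨ V2pi ε G x := by
  rw [pathStrata_eq_image hε hang hopen]
  constructor
  · intro hone
    obtain ⟨s, hs⟩ := Set.ncard_eq_one.1 hone
    have hstraight {y z : Pt} (hy : y ∈ nbhd G x) (hz : z ∈ nbhd G x) (hne : y ≠ z) :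
        StraightAt ε G y x z := by
      have hys : edgeStratum ε G x y = s := hs.subset ⟨y, hy, rfl⟩
      have hzs : edgeStratum ε G x z = s := hs.subset ⟨z, hz, rfl⟩
      exact ((edgeStratum_eq_iff hε hang hopen hy hz).1 (hys.trans hzs.symm)).resolve_left hne
    obtain ⟨a, ha, -⟩ : s ∈ edgeStratum ε G x '' nbhd G x := by simp [hs]
    by_cases hsub : nbhd G x ⊆ {a}
    · left
      rw [deg, hsub.antisymm (Set.singleton_subset_iff.2 ha), Set.ncard_singleton]
    · right
      obtain ⟨b, hb, hba : b ≠ a⟩ := Set.not_subset.1 hsub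
      have hbxa := hstraight hb ha hba
      refine ⟨mem_V_of_mem_nbhd (mem_nbhd_comm.1 ha), a, b, hba.symm, ?_, hbxa.2.2⟩
      refine Set.Subset.antisymm (fun c hc => ?_) (Set.pair_subset ha hb)
      by_contra! hcab
      rw [Set.mem_insert_iff, Set.mem_singleton_iff, not_or] at hcab
      exact hcab.1 ((hstraight hb hc (Ne.symm hcab.2)).unique hε hang hbxa)
  · rintro (hdeg | ⟨-, a, b, -, hnbhd, hangle⟩)
    · obtain ⟨a, ha⟩ := Set.ncard_eq_one.1 hdeg
      rw [ha, Set.image_singleton, Set.ncard_singleton]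
    · have hbxa : StraightAt ε G b x a := ⟨by simp [hnbhd], by simp [hnbhd], hangle⟩
      rw [hnbhd, Set.image_pair, hbxa.edgeStratum_eq hε hang hopen, Set.pair_eq_singleton,
        Set.ncard_singleton]

theorem ncard_pathStrata_add_ncard_pointTags (hε : ε < π / 6) (hang : GoodBondAngles ε G)
    (hopen : OnlyOpenPaths ε G) : (pathStrata ε G x).ncard + (pointTags ε G x).ncard = 2 := by
  have hle := ncard_pathStrata_le_two (x := x) hε hang hopen
  unfold pointTags
  rw [← ncard_pathStrata_eq_zero_iff hε hang hopen, ← ncard_pathStrata_eq_one_iff hε hang hopen]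
  interval_cases (pathStrata ε G x).ncard <;> simp

theorem mem_strataSet_iff {p : Stratum × Fin 2} : p ∈ strataSet ε G ↔
    (∃ γ, IsMaximalStraight ε G γ ∧ p = (Stratum.mk γ, 0)) ∨
      ∃ x ∈ G.V, p.1 = Stratum.mk [x] ∧ p.2 ∈ pointTags ε G x := by
  constructor
  · rintro ((⟨γ, hγ, rfl⟩ | ⟨x, hx, hdeg, rfl | rfl⟩) | ⟨x, hx, hdeg, rfl⟩)
    exacts [.inl ⟨γ, hγ, rfl⟩, .inr ⟨x, hx, rfl, .inl hdeg⟩, .inr ⟨x, hx, rfl, .inl hdeg⟩,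
      .inr ⟨x, hx, rfl, .inr ⟨hdeg, rfl⟩⟩]
  · obtain ⟨s, i⟩ := p
    rintro (⟨γ, hγ, heq⟩ | ⟨x, hx, rfl, hdeg | ⟨hdeg, rfl⟩⟩)
    · exact .inl (.inl ⟨γ, hγ, heq⟩)
    · refine .inl (.inr ⟨x, hx, hdeg, ?_⟩)
      obtain rfl | rfl : i = 0 ∨ i = 1 := by lia
      exacts [.inl rfl, .inr rfl]
    · exact .inr ⟨x, hx, hdeg, rfl⟩

theorem setOf_mem_verts_eq_union (hx : x ∈ G.V) : {p ∈ strataSet ε G | x ∈ p.1.verts} =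
    pathStrata ε G x ×ˢ {0} ∪ {Stratum.mk [x]} ×ˢ pointTags ε G x := by
  ext ⟨s, i⟩
  constructor
  · rintro ⟨hp, hxs⟩
    rcases mem_strataSet_iff.1 hp with ⟨γ, hγ, heq⟩ | ⟨y, -, rfl, hi⟩
    · obtain ⟨rfl, rfl⟩ := Prod.mk.inj heq
      exact .inl ⟨⟨γ, hγ, hxs, rfl⟩, rfl⟩
    · obtain rfl : x = y := List.mem_singleton.1 hxs
      exact .inr ⟨rfl, hi⟩
  · rintro (⟨⟨γ, hγ, hxγ, rfl⟩, rfl⟩ | ⟨rfl, hi⟩)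
    · exact ⟨mem_strataSet_iff.2 (.inl ⟨γ, hγ, rfl⟩), hxγ⟩
    · exact ⟨mem_strataSet_iff.2 (.inr ⟨x, hx, rfl, hi⟩), List.mem_singleton_self x⟩

theorem singleton_notMem_pathStrata : Stratum.mk [y] ∉ pathStrata ε G x := by
  rintro ⟨γ, hγ, -, heq⟩
  have hlen : 1 = γ.length := congrArg Stratum.len heq
  have := hγ.1.1
  lia

theorem ncard_strata_through (hε : ε < π / 6) (hang : GoodBondAngles ε G)
    (hopen : OnlyOpenPaths ε G) (hx : x ∈ G.V) :
    {p ∈ strataSet ε G | x ∈ p.1.verts}.ncard = 2 := by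
  have hdisj : Disjoint (pathStrata ε G x ×ˢ ({0} : Set (Fin 2)))
      ({Stratum.mk [x]} ×ˢ pointTags ε G x) :=
    Set.disjoint_prod.2 (.inl (Set.disjoint_singleton_right.2 singleton_notMem_pathStrata))
  have hfin : (pathStrata ε G x).Finite := by
    rw [pathStrata_eq_image hε hang hopen]
    exact (nbhd_finite x).image _
  rw [setOf_mem_verts_eq_union hx, Set.ncard_union_eq hdisj (hfin.prod (Set.finite_singleton 0))
    ((Set.finite_singleton _).prod (Set.toFinite _)), Set.ncard_prod, Set.ncard_prod,
    Set.ncard_singleton, Set.ncard_singleton, mul_one, one_mul,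
    ncard_pathStrata_add_ncard_pointTags hε hang hopen]

theorem exists_nodup_of_mem_strataSet (hopen : OnlyOpenPaths ε G) {p : Stratum × Fin 2}
    (hp : p ∈ strataSet ε G) :
    ∃ γ : List Pt, (γ.Nodup ∧ ∀ x ∈ γ, x ∈ G.V) ∧ Stratum.mk γ = p.1 := by
  rcases mem_strataSet_iff.1 hp with ⟨γ, hγ, rfl⟩ | ⟨x, hx, hpx, -⟩
  · exact ⟨γ, ⟨hγ.1.nodup hopen, hγ.1.2.1⟩, rfl⟩
  · exact ⟨[x], ⟨List.nodup_singleton x, by simpa using hx⟩, hpx.symm⟩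

theorem strataSet_finite (hopen : OnlyOpenPaths ε G) : (strataSet ε G).Finite :=
  (((finite_setOf_nodup_subset G.finV).image Stratum.mk).prod
    (Set.finite_univ (α := Fin 2))).subset fun _ hp =>
      ⟨exists_nodup_of_mem_strataSet hopen hp, Set.mem_univ _⟩

theorem len_eq_ncard_of_mem_strataSet (hopen : OnlyOpenPaths ε G) {p : Stratum × Fin 2}
    (hp : p ∈ strataSet ε G) : p.1.len = {x ∈ G.V | x ∈ p.1.verts}.ncard := by
  obtain ⟨γ, ⟨hnodup, hV⟩, hγ⟩ := exists_nodup_of_mem_strataSet hopen hp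
  have hverts : {x ∈ G.V | x ∈ p.1.verts} = (⟨γ, hnodup⟩ : Finset Pt) := by
    rw [← hγ]
    ext x
    exact ⟨And.right, fun hx => ⟨hV x hx, hx⟩⟩
  rw [hverts, Set.ncard_coe_finset, ← hγ]
  rfl

end Strata

/-! ### Double counting -/

theorem finsum_mem_ncard_comm {α β : Type*} {s : Set α} {t : Set β} (hs : s.Finite)
    (ht : t.Finite) (r : α → β → Prop) :
    ∑ᶠ a ∈ s, {b ∈ t | r a b}.ncard = ∑ᶠ b ∈ t, {a ∈ s | r a b}.ncard := by
  classical
  lift s to Finset α using hs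
  lift t to Finset β using ht
  rw [finsum_mem_coe_finset, finsum_mem_coe_finset]
  simpa only [Finset.mem_coe, Finset.bipartiteAbove, Finset.bipartiteBelow,
    ← Set.ncard_coe_finset, Finset.coe_filter] using
    Finset.sum_card_bipartiteAbove_eq_sum_card_bipartiteBelow r

theorem sum_strata_length_general {ε : ℝ} (hε : ε < π / 6) {G : BondGraph}
    (hang : GoodBondAngles ε G) (hopen : OnlyOpenPaths ε G) :
    ∑ᶠ p ∈ strataSet ε G, Stratum.len p.1 = 2 * G.V.ncard :=
  calc ∑ᶠ p ∈ strataSet ε G, Stratum.len p.1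
      = ∑ᶠ p ∈ strataSet ε G, {x ∈ G.V | x ∈ p.1.verts}.ncard :=
        finsum_mem_congr rfl fun _ => len_eq_ncard_of_mem_strataSet hopen
    _ = ∑ᶠ x ∈ G.V, {p ∈ strataSet ε G | x ∈ p.1.verts}.ncard :=
        finsum_mem_ncard_comm (strataSet_finite hopen) G.finV _
    _ = ∑ᶠ x ∈ G.V, 2 :=
        finsum_mem_congr rfl fun _ => ncard_strata_through hε hang hopen
    _ = 2 * G.V.ncard := by
        rw [← finsum_one, mul_finsum_mem, mul_one]

/-- **Lemma (properties of graphs containing only open paths, (i)).**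
Counting strata with multiplicity, `Σ_{s ∈ S(G)} l(s) = 2n`. -/
theorem sum_strata_length (ε : ℝ) (hε0 : 0 < ε) (hε : ε < π / 6)
    (G : BondGraph) (n : ℕ) (hn : G.V.ncard = n) (hreg : EpsRegular ε G)
    (hopen : ∀ γ : List Pt, IsStraightPath ε G γ → ¬ IsClosedPath γ) :
    ∑ᶠ p ∈ strataSet ε G, Stratum.len p.1 = 2 * n :=
  hn ▸ sum_strata_length_general hε hreg.goodBondAngles hopen

end
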